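/- Let f be a topologically transitive expansive homeomorphism with canonical coordinates of a compact metric space (M,d), where 3ξ is an expansivity constant and d is self-similar for f with expanding factor λ > 1 and constant ξ. Then f has homogeneous entropy: ent(W^u_ξ(x)) = ent(W^u_ξ(y)) and ent(W^s_ξ(x)) = ent(W^s_ξ(y)) for all x, y ∈ M. -/

import Mathlib

open Filter Topology

def Ws {M : Type*} [MetricSpace M] (f : Equiv.Perm M) (eps : ℝ) (x : M) : Set M :=
  {y | ∀ n : ℕ, dist ((f ^ n) x) ((f ^ n) y) ≤ eps}

def Wu {M : Type*} [MetricSpace M] (f : Equiv.Perm M) (eps : ℝ) (x : M) : Set M :=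
  {y | ∀ n : ℕ, dist ((f.symm ^ n) x) ((f.symm ^ n) y) ≤ eps}

/-- Diameter of a set with respect to an arbitrary "metric" `ρ`. -/
noncomputable def rdiam {M : Type*} (ρ : M → M → ℝ) (A : Set M) : ℝ :=
  sSup {r : ℝ | ∃ a ∈ A, ∃ b ∈ A, r = ρ a b}

/-- Minimal cardinality of a finite cover of `X` by sets of `ρ`-diameter `< ε`. -/
noncomputable def covN {M : Type*} (X : Set M) (ρ : M → M → ℝ) (ε : ℝ) : ℕ :=
  sInf {n : ℕ | ∃ U : Fin n → Set M, X ⊆ (⋃ i, U i) ∧ ∀ i, rdiam ρ (U i) < ε}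

/-- `dᶠₙ(x,y) = max_{|k| ≤ n} d(fᵏ x, fᵏ y)`. -/
noncomputable def dFn {M : Type*} [MetricSpace M] (f : Equiv.Perm M) (n : ℕ) (x y : M) : ℝ :=
  sSup {r : ℝ | ∃ k : ℤ, |k| ≤ (n : ℤ) ∧ r = dist ((f ^ k) x) ((f ^ k) y)}

/-!
Along a local unstable set, self-similarity makes the distance shrink by the factor `lam` with every
backward step. Hence `W^u_ξ(y)` is a finite union of arbitrarily small plaques `W^u_δ(z)`. By
transitivity and canonical coordinates, some forward iterate of `W^u_ξ(x)` passes close to `z`, and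
sliding points of `W^u_δ(z)` along local stable sets into that iterate changes `dFn f n` by at most
a fixed fraction of `ξ`, at the price of a bounded number of extra iterates. This bounds the
covering number of `W^u_ξ(y)` at time `n` by a constant times that of `W^u_ξ(x)` at time `n + L`,
and `(1/n) log` forgets the constants. The stable case is the unstable case for `f⁻¹`.
-/

section CoveringNumbers

variable {α β : Type*} {ρ : α → α → ℝ} {σ : β → β → ℝ} {ε η : ℝ}

theorem rdiam_le {A : Set α} {c : ℝ} (hc : 0 ≤ c) (h : ∀ a ∈ A, ∀ b ∈ A, ρ a b ≤ c) :
    rdiam ρ A ≤ c := by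
  refine Real.sSup_le ?_ hc
  rintro _ ⟨a, ha, b, hb, rfl⟩
  exact h a ha b hb

theorem rdiam_nonneg (hρ : ∀ a b, 0 ≤ ρ a b) (A : Set α) : 0 ≤ rdiam ρ A := by
  refine Real.sSup_nonneg ?_
  rintro _ ⟨a, -, b, -, rfl⟩
  exact hρ a b

theorem le_rdiam {D : ℝ} (hD : ∀ a b, ρ a b ≤ D) {A : Set α} {a b : α} (ha : a ∈ A)
    (hb : b ∈ A) : ρ a b ≤ rdiam ρ A := by
  refine le_csSup ⟨D, ?_⟩ ⟨a, ha, b, hb, rfl⟩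
  rintro _ ⟨a, -, b, -, rfl⟩
  exact hD a b

/-- `X` has a finite cover by sets of `ρ`-diameter `< ε`. When this fails, `covN X ρ ε` is the
junk value `sInf ∅ = 0`. -/
def FinitelyCoverable (X : Set α) (ρ : α → α → ℝ) (ε : ℝ) : Prop :=
  ∃ n, ∃ U : Fin n → Set α, X ⊆ (⋃ i, U i) ∧ ∀ i, rdiam ρ (U i) < ε

theorem FinitelyCoverable.exists_cover_covN {X : Set α} (hX : FinitelyCoverable X ρ ε) :
    ∃ U : Fin (covN X ρ ε) → Set α, X ⊆ (⋃ i, U i) ∧ ∀ i, rdiam ρ (U i) < ε :=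
  Nat.sInf_mem hX

theorem FinitelyCoverable.covN_pos {X : Set α} (hX : FinitelyCoverable X ρ ε)
    (hne : X.Nonempty) : 0 < covN X ρ ε := by
  obtain ⟨U, hXU, -⟩ := hX.exists_cover_covN
  obtain ⟨i, -⟩ := Set.mem_iUnion.mp (hXU hne.some_mem)
  exact i.pos

theorem exists_cover_fin_card {ι : Type*} [Fintype ι] {X : Set α} {U : ι → Set α}
    (hXU : X ⊆ ⋃ i, U i) (hU : ∀ i, rdiam ρ (U i) < ε) :
    ∃ V : Fin (Fintype.card ι) → Set α, X ⊆ (⋃ i, V i) ∧ ∀ i, rdiam ρ (V i) < ε :=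
  ⟨U ∘ (Fintype.equivFin ι).symm,
    hXU.trans_eq ((Fintype.equivFin ι).symm.surjective.iUnion_comp U).symm, fun _ => hU _⟩

theorem covN_le_card {ι : Type*} [Fintype ι] {X : Set α} {U : ι → Set α}
    (hXU : X ⊆ ⋃ i, U i) (hU : ∀ i, rdiam ρ (U i) < ε) : covN X ρ ε ≤ Fintype.card ι :=
  Nat.sInf_le (exists_cover_fin_card hXU hU)

theorem covN_le_covN_of_mapsTo {X : Set α} {Y : Set β} {φ : α → β} (hφ : Set.MapsTo φ X Y)
    (hY : FinitelyCoverable Y σ η)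
    (h : ∀ B, rdiam σ B < η → rdiam ρ (X ∩ φ ⁻¹' B) < ε) : covN X ρ ε ≤ covN Y σ η := by
  obtain ⟨U, hYU, hU⟩ := hY.exists_cover_covN
  have hXU : X ⊆ ⋃ i, X ∩ φ ⁻¹' U i := fun x hx => by
    obtain ⟨i, hi⟩ := Set.mem_iUnion.mp (hYU (hφ hx))
    exact Set.mem_iUnion.mpr ⟨i, hx, hi⟩
  simpa only [Fintype.card_fin] using covN_le_card hXU fun i => h _ (hU i)

theorem covN_le_sum {ι : Type*} {s : Finset ι} {X : Set α} {Y : ι → Set α}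
    (hXY : X ⊆ ⋃ i ∈ s, Y i) (hY : ∀ i, FinitelyCoverable (Y i) ρ ε) :
    covN X ρ ε ≤ ∑ i ∈ s, covN (Y i) ρ ε := by
  choose U hYU hU using fun i => (hY i).exists_cover_covN
  have hXU : X ⊆ ⋃ p : Σ i : s, Fin (covN (Y i) ρ ε), U p.1 p.2 := fun x hx => by
    obtain ⟨i, hi, hxi⟩ := Set.mem_iUnion₂.mp (hXY hx)
    obtain ⟨j, hj⟩ := Set.mem_iUnion.mp (hYU i hxi)
    exact Set.mem_iUnion.mpr ⟨⟨⟨i, hi⟩, j⟩, hj⟩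
  calc covN X ρ ε ≤ Fintype.card (Σ i : s, Fin (covN (Y i) ρ ε)) :=
        covN_le_card hXU fun p => hU p.1 p.2
    _ = ∑ i ∈ s, covN (Y i) ρ ε := by
        simp only [Fintype.card_sigma, Fintype.card_fin]
        exact s.sum_coe_sort fun i => covN (Y i) ρ ε

end CoveringNumbers

section ExponentialGrowth

open Asymptotics

theorem tendsto_add_div_natCast_iff {a : ℕ → ℝ} {E : ℝ} (L : ℕ) :
    Tendsto (fun n : ℕ => a (n + L) / n) atTop (𝓝 E) ↔
      Tendsto (fun n : ℕ => a n / n) atTop (𝓝 E) := by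
  rw [← tendsto_add_atTop_iff_nat (f := fun n : ℕ => a n / n) L]
  have hshift : (fun n : ℕ => ((n + L : ℕ) : ℝ)) ~[atTop] fun n : ℕ => (n : ℝ) := by
    simp only [Nat.cast_add]
    exact IsEquivalent.refl.add_isLittleO
      ((isLittleO_const_id_atTop (L : ℝ)).comp_tendsto tendsto_natCast_atTop_atTop)
  exact (IsEquivalent.refl.div hshift.symm).tendsto_nhds_iff

theorem tendsto_div_natCast_of_le_add_shift {a b : ℕ → ℝ} {E C C' : ℝ} {L L' : ℕ}
    (hba : ∀ n, b n ≤ C + a (n + L)) (hab : ∀ n, a n ≤ C' + b (n + L'))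
    (ha : Tendsto (fun n : ℕ => a n / n) atTop (𝓝 E)) :
    Tendsto (fun n : ℕ => b n / n) atTop (𝓝 E) := by
  have hconst (c : ℝ) : Tendsto (fun n : ℕ => c / n) atTop (𝓝 0) :=
    tendsto_const_div_atTop_nhds_zero_nat c
  have lower : Tendsto (fun n : ℕ => a n / n - C' / n) atTop (𝓝 E) := by
    simpa only [sub_zero] using ha.sub (hconst C')
  have upper : Tendsto (fun n : ℕ => C / n + a (n + (L' + L)) / n) atTop (𝓝 E) := by
    simpa only [zero_add] using (hconst C).add ((tendsto_add_div_natCast_iff (L' + L)).2 ha)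
  refine (tendsto_add_div_natCast_iff L').1
    (tendsto_of_tendsto_of_tendsto_of_le_of_le lower upper (fun n => ?_) fun n => ?_)
  · rw [← sub_div]
    gcongr
    linarith [hab n]
  · rw [← add_div, ← add_assoc]
    gcongr
    exact hba (n + L')

theorem tendsto_log_div_natCast_of_le_mul_shift {u v : ℕ → ℕ} {C C' L L' : ℕ} {E : ℝ}
    (hu : ∀ n, 0 < u n) (hv : ∀ n, 0 < v n) (hvu : ∀ n, v n ≤ C * u (n + L))
    (huv : ∀ n, u n ≤ C' * v (n + L'))
    (h : Tendsto (fun n : ℕ => Real.log (u n) / n) atTop (𝓝 E)) :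
    Tendsto (fun n : ℕ => Real.log (v n) / n) atTop (𝓝 E) := by
  have log_le {p q r : ℕ} (hp : 0 < p) (hpqr : p ≤ q * r) :
      Real.log p ≤ Real.log q + Real.log r := by
    have hqr : q * r ≠ 0 := (hp.trans_le hpqr).ne'
    rw [← Real.log_mul (Nat.cast_ne_zero.2 (left_ne_zero_of_mul hqr))
      (Nat.cast_ne_zero.2 (right_ne_zero_of_mul hqr))]
    exact Real.log_le_log (Nat.cast_pos.2 hp) (mod_cast hpqr)
  exact tendsto_div_natCast_of_le_add_shift (fun n => log_le (hv n) (hvu n))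
    (fun n => log_le (hu n) (huv n)) h

end ExponentialGrowth

section LocalSets

variable {M : Type*} [MetricSpace M] {f : Equiv.Perm M} {ε ε' : ℝ} {x y z : M} {n : ℕ}

theorem symm_zpow {α : Type*} (f : Equiv.Perm α) (k : ℤ) : f.symm ^ k = f ^ (-k) := by
  rw [← Equiv.Perm.inv_def, inv_zpow']

theorem Ws_symm : Ws f.symm ε x = Wu f ε x := rfl

theorem mem_Ws_iff : y ∈ Ws f ε x ↔ ∀ k : ℤ, 0 ≤ k → dist ((f ^ k) x) ((f ^ k) y) ≤ ε := by
  refine ⟨fun h k hk => ?_, fun h n => h n n.cast_nonneg⟩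
  lift k to ℕ using hk
  exact h k

theorem mem_Wu_iff : y ∈ Wu f ε x ↔ ∀ k : ℤ, k ≤ 0 → dist ((f ^ k) x) ((f ^ k) y) ≤ ε := by
  rw [← Ws_symm, mem_Ws_iff]
  simp only [symm_zpow]
  exact ⟨fun h k hk => by simpa only [neg_neg] using h (-k) (neg_nonneg.2 hk),
    fun h k hk => h (-k) (neg_nonpos.2 hk)⟩

theorem mem_Wu_self (hε : 0 ≤ ε) : x ∈ Wu f ε x := fun _ => by rwa [dist_self]

theorem mem_Wu_comm : y ∈ Wu f ε x ↔ x ∈ Wu f ε y :=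
  forall_congr' fun _ => by rw [dist_comm]

theorem mem_Wu_mono (hε : ε ≤ ε') (h : y ∈ Wu f ε x) : y ∈ Wu f ε' x :=
  fun n => (h n).trans hε

theorem mem_Wu_trans (hxy : y ∈ Wu f ε x) (hyz : z ∈ Wu f ε' y) : z ∈ Wu f (ε + ε') x :=
  fun n => (dist_triangle _ _ _).trans (add_le_add (hxy n) (hyz n))

theorem dist_le_of_mem_Wu (h : y ∈ Wu f ε x) : dist x y ≤ ε := h 0

theorem zpow_mem_Wu_of_nonpos {k : ℤ} (hk : k ≤ 0) (h : y ∈ Wu f ε x) :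
    (f ^ k) y ∈ Wu f ε ((f ^ k) x) := by
  refine mem_Wu_iff.2 fun j hj => ?_
  simp only [← Equiv.Perm.mul_apply, ← zpow_add]
  exact mem_Wu_iff.1 h _ (add_nonpos hj hk)

theorem dFn_le_iff {c : ℝ} :
    dFn f n x y ≤ c ↔ ∀ k : ℤ, |k| ≤ n → dist ((f ^ k) x) ((f ^ k) y) ≤ c := by
  have hset : {r : ℝ | ∃ k : ℤ, |k| ≤ (n : ℤ) ∧ r = dist ((f ^ k) x) ((f ^ k) y)} =
      (fun k : ℤ => dist ((f ^ k) x) ((f ^ k) y)) '' Set.Icc (-n : ℤ) n := by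
    ext r
    simp only [Set.mem_image, Set.mem_Icc, ← abs_le, Set.mem_ofPred_eq, eq_comm]
  rw [dFn, hset, csSup_le_iff ((Set.finite_Icc _ _).image _).bddAbove
    ((Set.nonempty_Icc.2 (by lia)).image _)]
  simp only [Set.forall_mem_image, Set.mem_Icc, ← abs_le]

theorem dist_zpow_le_dFn {k : ℤ} (hk : |k| ≤ n) : dist ((f ^ k) x) ((f ^ k) y) ≤ dFn f n x y :=
  dFn_le_iff.1 le_rfl k hk

theorem dFn_nonneg : 0 ≤ dFn f n x y :=
  dist_nonneg.trans (dist_zpow_le_dFn (k := 0) (by simp))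

theorem dFn_symm (f : Equiv.Perm M) (n : ℕ) : dFn f.symm n = dFn f n := by
  refine funext₂ fun x y => eq_of_forall_ge_iff fun c => ?_
  simp only [dFn_le_iff, symm_zpow]
  exact (Equiv.neg ℤ).forall_congr (by simp)

theorem dFn_le_rdiam [BoundedSpace M] {A : Set M} (hx : x ∈ A) (hy : y ∈ A) :
    dFn f n x y ≤ rdiam (dFn f n) A := by
  have hbdd (a b : M) : dFn f n a b ≤ Metric.diam (Set.univ : Set M) :=
    dFn_le_iff.2 fun _ _ => Metric.dist_le_diam_of_mem (Bornology.IsBounded.all _)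
      (Set.mem_univ _) (Set.mem_univ _)
  exact le_rdiam hbdd hx hy

theorem covN_dFn_le_of_mapsTo_zpow [BoundedSpace M] {X Y : Set M} {n' : ℕ} {j : ℤ}
    (hY : FinitelyCoverable Y (dFn f n') ε) (hXY : Set.MapsTo (f ^ j) X Y)
    (hn : |j| + n ≤ n') : covN X (dFn f n) ε ≤ covN Y (dFn f n') ε := by
  refine covN_le_covN_of_mapsTo hXY hY fun B hB => lt_of_le_of_lt ?_ hB
  refine rdiam_le (rdiam_nonneg (fun _ _ => dFn_nonneg) B) fun a ha b hb =>
    dFn_le_iff.2 fun k hk => ?_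
  have hshift (c : M) : (f ^ k) c = (f ^ (k - j)) ((f ^ j) c) := by
    rw [← Equiv.Perm.mul_apply, ← zpow_add, sub_add_cancel]
  have hkj : |k - j| ≤ n' := (abs_sub k j).trans (by lia)
  rw [hshift a, hshift b]
  exact (dist_zpow_le_dFn hkj).trans (dFn_le_rdiam ha.2 hb.2)

end LocalSets

section SelfSimilar

theorem mul_succ_le_of_mul_succ_le_max {u : ℕ → ℝ} {lam : ℝ} (hlam : 1 < lam)
    (hu : ∀ k, 0 ≤ u k) (hbdd : BddAbove (Set.range u))
    (hmax : ∀ k, lam * u (k + 1) ≤ max (u k) (u (k + 2))) (k : ℕ) :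
    lam * u (k + 1) ≤ u k := by
  by_contra! hk
  have escape {j : ℕ} (hj : u j < lam * u (j + 1)) : lam * u (j + 1) ≤ u (j + 2) :=
    (le_max_iff.1 (hmax j)).resolve_left hj.not_ge
  have pos {j : ℕ} (hj : u j < lam * u (j + 1)) : 0 < u (j + 1) :=
    pos_of_mul_pos_right ((hu j).trans_lt hj) (by linarith)
  have increasing (j : ℕ) : u (k + j) < lam * u (k + j + 1) := by
    induction j with
    | zero => exact hk
    | succ j ih =>
      calc u (k + j + 1) < lam * u (k + j + 1) := lt_mul_of_one_lt_left (pos ih) hlam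
        _ ≤ u (k + j + 2) := escape ih
        _ ≤ lam * u (k + j + 2) := le_mul_of_one_le_left (hu _) hlam.le
  have unbounded : Tendsto (fun j => u (k + 1 + j)) atTop atTop :=
    tendsto_atTop_of_geom_le (pos hk) hlam fun j => by
      have hj := escape (increasing j)
      rwa [show k + j + 1 = k + 1 + j by lia, show k + j + 2 = k + 1 + (j + 1) by lia] at hj
  exact not_bddAbove_of_tendsto_atTop unbounded
    (hbdd.mono (Set.range_comp_subset_range (fun j => k + 1 + j) u))

/-- The metric is self-similar for `f` with expanding factor `lam` and constant `ξ`. -/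
def IsSelfSimilar {M : Type*} [MetricSpace M] (f : Equiv.Perm M) (ξ lam : ℝ) : Prop :=
  ∀ p q : M, dist p q ≤ ξ →
    max (dist (f p) (f q)) (dist (f.symm p) (f.symm q)) = lam * dist p q

namespace IsSelfSimilar

variable {M : Type*} [MetricSpace M] {f : Equiv.Perm M} {ξ lam δ : ℝ} {a b u v y : M}
  {m n : ℕ}

theorem symm (hf : IsSelfSimilar f ξ lam) : IsSelfSimilar f.symm ξ lam :=
  fun p q h => (max_comm _ _).trans (hf p q h)

theorem dist_pow_le (hf : IsSelfSimilar f ξ lam) (hlam : 1 ≤ lam)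
    (h : lam ^ n * dist a b ≤ ξ) : dist ((f ^ n) a) ((f ^ n) b) ≤ lam ^ n * dist a b := by
  induction n with
  | zero => simp
  | succ n ih =>
    have hpow : lam ^ n * dist a b ≤ lam ^ (n + 1) * dist a b := by
      gcongr
      exact n.le_succ
    have hn := ih (hpow.trans h)
    rw [pow_succ', Equiv.Perm.mul_apply, Equiv.Perm.mul_apply, pow_succ', mul_assoc]
    calc dist (f ((f ^ n) a)) (f ((f ^ n) b)) ≤ lam * dist ((f ^ n) a) ((f ^ n) b) :=
          (le_max_left _ _).trans_eq (hf _ _ (hn.trans (hpow.trans h)))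
      _ ≤ lam * (lam ^ n * dist a b) := by gcongr

theorem dFn_le (hf : IsSelfSimilar f ξ lam) (hlam : 1 ≤ lam) (h : lam ^ n * dist a b ≤ ξ) :
    dFn f n a b ≤ lam ^ n * dist a b := by
  refine dFn_le_iff.2 fun k hk => ?_
  have hpow : lam ^ k.natAbs * dist a b ≤ lam ^ n * dist a b := by
    gcongr
    zify; exact hk
  refine le_trans ?_ hpow
  rcases Int.natAbs_eq k with hk | hk
  · rw [hk, zpow_natCast, Int.natAbs_natCast]
    exact hf.dist_pow_le hlam (hpow.trans h)
  · rw [hk, ← symm_zpow, zpow_natCast, Int.natAbs_neg, Int.natAbs_natCast]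
    exact hf.symm.dist_pow_le hlam (hpow.trans h)

theorem finitelyCoverable_dFn (hf : IsSelfSimilar f ξ lam) (hM : TotallyBounded (Set.univ : Set M))
    (hξ : 0 < ξ) (hlam : 1 ≤ lam) (X : Set M) (n : ℕ) : FinitelyCoverable X (dFn f n) ξ := by
  have hpow : 0 < lam ^ n := by positivity
  obtain ⟨t, ht, hcover⟩ := Metric.totallyBounded_iff.1 hM (ξ / 4 / lam ^ n) (by positivity)
  have : Fintype t := ht.fintype
  refine ⟨_, exists_cover_fin_card (ι := t) (U := fun y => Metric.ball y (ξ / 4 / lam ^ n)) ?_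
    fun y => ?_⟩
  · rw [← Set.biUnion_eq_iUnion t fun y _ => Metric.ball y (ξ / 4 / lam ^ n)]
    exact X.subset_univ.trans hcover
  · refine (rdiam_le (half_pos hξ).le fun a ha b hb => ?_).trans_lt (half_lt_self hξ)
    have hab : lam ^ n * dist a b ≤ ξ / 2 := by
      have ha' := (lt_div_iff₀' hpow).1 (Metric.mem_ball.1 ha)
      have hb' := (lt_div_iff₀' hpow).1 (Metric.mem_ball.1 hb)
      calc lam ^ n * dist a b ≤ lam ^ n * (dist a y + dist b y) := by
            gcongr
            exact dist_triangle_right a b y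
        _ ≤ ξ / 2 := by linarith
    exact (hf.dFn_le hlam (by linarith)).trans hab

theorem pow_mul_dist_zpow_sub_le (hf : IsSelfSimilar f ξ lam) (hlam : 1 < lam) {K : ℤ}
    (h : ∀ k ≤ K, dist ((f ^ k) a) ((f ^ k) b) ≤ ξ) (m : ℕ) :
    lam ^ m * dist ((f ^ (K - m)) a) ((f ^ (K - m)) b) ≤ dist ((f ^ K) a) ((f ^ K) b) := by
  have next (j : ℕ) (c : M) : f ((f ^ (K - (j + 1 : ℕ))) c) = (f ^ (K - j)) c := by
    rw [← Equiv.Perm.mul_apply, ← zpow_one_add]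
    congr 2
    lia
  have prev (j : ℕ) (c : M) : f.symm ((f ^ (K - (j + 1 : ℕ))) c) = (f ^ (K - (j + 2 : ℕ))) c := by
    rw [Equiv.symm_apply_eq, next (j + 1)]
  have contract := mul_succ_le_of_mul_succ_le_max
    (u := fun j => dist ((f ^ (K - j)) a) ((f ^ (K - j)) b)) hlam (fun _ => dist_nonneg)
    ⟨ξ, Set.forall_mem_range.2 fun j => h _ (by lia)⟩ fun j => by
      simpa only [next, prev] using (hf _ _ (h (K - (j + 1 : ℕ)) (by lia))).ge
  induction m with
  | zero => simp
  | succ m ih =>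
    rw [pow_succ, mul_assoc]
    exact le_trans (by gcongr; exact contract m) ih

theorem mem_Wu_dist (hf : IsSelfSimilar f ξ lam) (hlam : 1 < lam) (h : b ∈ Wu f ξ a) :
    b ∈ Wu f (dist a b) a := by
  refine mem_Wu_iff.2 fun k hk => ?_
  have hcontract := hf.pow_mul_dist_zpow_sub_le hlam (mem_Wu_iff.1 h) k.natAbs
  rw [show (0 : ℤ) - k.natAbs = k by lia, zpow_zero] at hcontract
  exact (le_mul_of_one_le_left dist_nonneg (one_le_pow₀ hlam.le)).trans hcontract

theorem pow_mul_dist_zpow_le (hf : IsSelfSimilar f ξ lam) (hlam : 1 < lam)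
    (huv : v ∈ Wu f ξ u) (hd : dFn f (n + m) u v ≤ ξ) {k : ℤ} (hk : k ≤ n) :
    lam ^ m * dist ((f ^ k) u) ((f ^ k) v) ≤ ξ := by
  have hle : ∀ j ≤ k + m, dist ((f ^ j) u) ((f ^ j) v) ≤ ξ := fun j hj => by
    rcases le_total j 0 with hj0 | hj0
    · exact mem_Wu_iff.1 huv j hj0
    · exact dFn_le_iff.1 hd j (by rw [abs_of_nonneg hj0]; lia)
  have hcontract := hf.pow_mul_dist_zpow_sub_le hlam hle m
  rw [add_sub_cancel_right] at hcontract
  exact hcontract.trans (hle _ le_rfl)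

theorem mem_Wu_dist_of_mem_Wu (hf : IsSelfSimilar f ξ lam) (hlam : 1 < lam) {K : ℕ}
    (hK : 2 ≤ lam ^ K) (ha : a ∈ Wu f ξ y) (hb : b ∈ Wu f ξ y) (hab : lam ^ K * dist a b ≤ ξ) :
    b ∈ Wu f (dist a b) a := by
  refine hf.mem_Wu_dist hlam (mem_Wu_iff.2 fun k hk => ?_)
  rcases le_total (-K : ℤ) k with hKk | hkK
  · exact (dist_zpow_le_dFn (abs_le.2 ⟨hKk, by lia⟩)).trans ((hf.dFn_le hlam.le hab).trans hab)
  · have half {c : M} (hc : c ∈ Wu f ξ y) : dist ((f ^ k) y) ((f ^ k) c) ≤ ξ / 2 := by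
      have hcontract : lam ^ K * dist ((f ^ k) y) ((f ^ k) c) ≤ ξ := by
        have h := hf.pow_mul_dist_zpow_sub_le hlam
          (fun j (hj : j ≤ k + K) => mem_Wu_iff.1 hc j (by lia)) K
        rw [add_sub_cancel_right] at h
        exact h.trans (mem_Wu_iff.1 hc _ (by lia))
      nlinarith [dist_nonneg (x := (f ^ k) y) (y := (f ^ k) c)]
    linarith [dist_triangle_left ((f ^ k) a) ((f ^ k) b) ((f ^ k) y), half ha, half hb]

theorem exists_finset_Wu_subset_biUnion_Wu (hf : IsSelfSimilar f ξ lam)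
    (hM : TotallyBounded (Set.univ : Set M)) (hξ : 0 < ξ) (hlam : 1 < lam) (hδ : 0 < δ) (y : M) :
    ∃ t : Finset M, Wu f ξ y ⊆ ⋃ z ∈ t, Wu f δ z := by
  obtain ⟨K, hK⟩ := pow_unbounded_of_one_lt 2 hlam
  have hpow : 0 < lam ^ K := by positivity
  obtain ⟨t, hty, ht, hcover⟩ := Metric.finite_approx_of_totallyBounded
    (hM.subset (Set.subset_univ (Wu f ξ y))) (min δ (ξ / lam ^ K)) (by positivity)
  refine ⟨ht.toFinset, fun q hq => ?_⟩
  obtain ⟨z, hz, hqz⟩ := Set.mem_iUnion₂.mp (hcover hq)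
  rw [Metric.mem_ball', lt_min_iff, lt_div_iff₀' hpow] at hqz
  exact Set.mem_biUnion (ht.mem_toFinset.2 hz)
    (mem_Wu_mono hqz.1.le (hf.mem_Wu_dist_of_mem_Wu hlam hK.le (hty hz) hq hqz.2.le))

/- For `0 ≤ k` the orbits of `a` and `b` are compared through those of `u` and `v`; the `m` extra
iterates in `hd` are what makes the middle distance at most `ξ / 4`. -/
theorem dFn_le_of_mem_Ws (hf : IsSelfSimilar f ξ lam) (hlam : 1 < lam) (hm : 4 ≤ lam ^ m)
    (hab : b ∈ Wu f (ξ / 2) a) (hau : u ∈ Ws f (ξ / 4) a) (hbv : v ∈ Ws f (ξ / 4) b)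
    (huv : v ∈ Wu f ξ u) (hd : dFn f (n + m) u v ≤ ξ) : dFn f n a b ≤ 3 / 4 * ξ := by
  have hξ : 0 ≤ ξ := dist_nonneg.trans (dist_le_of_mem_Wu huv)
  refine dFn_le_iff.2 fun k hk => ?_
  rcases le_total k 0 with hk0 | hk0
  · linarith [mem_Wu_iff.1 hab k hk0]
  · have hau' := mem_Ws_iff.1 hau k hk0
    have hbv' := mem_Ws_iff.1 hbv k hk0
    have huv' : dist ((f ^ k) u) ((f ^ k) v) ≤ ξ / 4 := by
      nlinarith [hf.pow_mul_dist_zpow_le hlam huv hd ((le_abs_self k).trans hk),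
        dist_nonneg (x := (f ^ k) u) (y := (f ^ k) v)]
    rw [dist_comm] at hbv'
    linarith [dist_triangle4 ((f ^ k) a) ((f ^ k) u) ((f ^ k) v) ((f ^ k) b)]

end IsSelfSimilar

end SelfSimilar

section CanonicalCoordinates

open scoped Pointwise in
theorem isTopologicallyTransitive_powers_iff {α : Type*} [TopologicalSpace α]
    {f : Equiv.Perm α} :
    MulAction.IsTopologicallyTransitive (Submonoid.powers f) α ↔
      ∀ U V : Set α, IsOpen U → U.Nonempty → IsOpen V → V.Nonempty →
        ∃ n : ℕ, ∃ x ∈ U, (f ^ n) x ∈ V := by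
  rw [MulAction.isTopologicallyTransitive_iff]
  refine ⟨fun h U V hU hUne hV hVne => ?_, fun h U V hU hUne hV hVne => ?_⟩
  · obtain ⟨⟨_, n, rfl⟩, _, ⟨x, hx, rfl⟩, hfx⟩ := h hU hUne hV hVne
    exact ⟨n, x, hx, hfx⟩
  · obtain ⟨n, x, hx, hfx⟩ := h U V hU hUne hV hVne
    exact ⟨⟨f ^ n, n, rfl⟩, _, Set.smul_mem_smul_set hx, hfx⟩

theorem isTopologicallyTransitive_powers_symm {α : Type*} [TopologicalSpace α]
    {f : Equiv.Perm α} (h : MulAction.IsTopologicallyTransitive (Submonoid.powers f) α) :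
    MulAction.IsTopologicallyTransitive (Submonoid.powers f.symm) α := by
  refine isTopologicallyTransitive_powers_iff.2 fun U V hU hUne hV hVne => ?_
  obtain ⟨n, x, hx, hfx⟩ := isTopologicallyTransitive_powers_iff.1 h V U hV hVne hU hUne
  refine ⟨n, (f ^ n) x, hfx, ?_⟩
  rwa [← Equiv.Perm.mul_apply, ← Equiv.Perm.inv_def, inv_pow, inv_mul_cancel,
    Equiv.Perm.one_apply]

theorem isTopologicallyTransitive_powers_of_dense {α : Type*} [TopologicalSpace α]
    {f : Equiv.Perm α} (hf : Continuous f)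
    (h : ∃ x₀, Dense (Set.range fun n : ℕ => (f ^ n) x₀)) :
    MulAction.IsTopologicallyTransitive (Submonoid.powers f) α := by
  obtain ⟨x₀, hx₀⟩ := h
  refine isTopologicallyTransitive_powers_iff.2 fun U V hU hUne hV hVne => ?_
  obtain ⟨_, ⟨k, rfl⟩, hk⟩ := hx₀.exists_mem_open hU hUne
  have hcont : Continuous (f ^ k : Equiv.Perm α) := by
    rw [Equiv.Perm.coe_pow]
    exact hf.iterate k
  obtain ⟨_, ⟨n, rfl⟩, hn⟩ := hx₀.exists_mem_open (hV.preimage hcont)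
    (hVne.preimage (f ^ k).surjective)
  refine ⟨n, (f ^ k) x₀, hk, ?_⟩
  rwa [← Equiv.Perm.mul_apply, pow_mul_comm]

/-- Points that are close enough have local stable and unstable sets that meet. -/
def HasCanonicalCoordinates {M : Type*} [MetricSpace M] (f : Equiv.Perm M) : Prop :=
  ∀ ε > (0 : ℝ), ∃ δ > (0 : ℝ), ∀ x y : M, dist x y < δ → (Ws f ε x ∩ Wu f ε y).Nonempty

variable {M : Type*} [MetricSpace M] {f : Equiv.Perm M} {ξ lam ε : ℝ}

theorem HasCanonicalCoordinates.symm (hcc : HasCanonicalCoordinates f) :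
    HasCanonicalCoordinates f.symm := fun ε hε => by
  obtain ⟨δ, hδ, h⟩ := hcc ε hε
  refine ⟨δ, hδ, fun x y hxy => ?_⟩
  obtain ⟨w, hwy, hwx⟩ := h y x (by rwa [dist_comm])
  exact ⟨w, hwx, hwy⟩

theorem exists_mem_Wu_dist_pow_lt (hcc : HasCanonicalCoordinates f)
    (htr : MulAction.IsTopologicallyTransitive (Submonoid.powers f) M) (hε : 0 < ε) (x z : M) :
    ∃ w ∈ Wu f ε x, ∃ n : ℕ, dist ((f ^ n) w) z < ε := by
  obtain ⟨δ, hδ, hmeet⟩ := hcc (ε / 2) (half_pos hε)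
  obtain ⟨n, u, hux, huz⟩ := isTopologicallyTransitive_powers_iff.1 htr
    (Metric.ball x δ) (Metric.ball z (ε / 2)) Metric.isOpen_ball (Metric.nonempty_ball.2 hδ)
    Metric.isOpen_ball (Metric.nonempty_ball.2 (half_pos hε))
  obtain ⟨w, hwu, hwx⟩ := hmeet u x hux
  refine ⟨w, mem_Wu_mono (half_le_self hε.le) hwx, n, ?_⟩
  calc dist ((f ^ n) w) z ≤ dist ((f ^ n) u) ((f ^ n) w) + dist ((f ^ n) u) z :=
        dist_triangle_left _ _ _
    _ < ε / 2 + ε / 2 := add_lt_add_of_le_of_lt (hwu n) huz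
    _ = ε := add_halves ε

theorem exists_covN_Wu_le_of_dist_lt (hM : TotallyBounded (Set.univ : Set M))
    (hξ : 0 < ξ) (hlam : 1 < lam) (hf : IsSelfSimilar f ξ lam) (hcc : HasCanonicalCoordinates f) :
    ∃ δ > 0, δ ≤ ξ / 4 ∧ ∃ m : ℕ, ∀ p z : M, dist p z < δ → ∀ n,
      covN (Wu f δ z) (dFn f n) ξ ≤ covN (Wu f (ξ / 4) p) (dFn f (n + m)) ξ := by
  have : BoundedSpace M := ⟨hM.isBounded⟩
  obtain ⟨m, hm⟩ := pow_unbounded_of_one_lt 4 hlam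
  obtain ⟨δ₀, hδ₀, hmeet⟩ := hcc (ξ / 4) (by positivity)
  refine ⟨min (ξ / 4) (δ₀ / 2), by positivity, min_le_left _ _, m, fun p z hpz n => ?_⟩
  set δ := min (ξ / 4) (δ₀ / 2)
  have hδξ : δ ≤ ξ / 4 := min_le_left _ _
  have hδδ₀ : δ ≤ δ₀ / 2 := min_le_right _ _
  have : Nonempty M := ⟨p⟩
  have slide : ∀ q ∈ Wu f δ z, (Ws f (ξ / 4) q ∩ Wu f (ξ / 4) p).Nonempty := fun q hq =>
    hmeet q p (by linarith [dist_triangle_left q p z, dist_le_of_mem_Wu hq, dist_comm z p])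
  choose! h hs hu using slide
  refine covN_le_covN_of_mapsTo hu (hf.finitelyCoverable_dFn hM hξ hlam.le _ _) fun B hB => ?_
  refine (rdiam_le (c := 3 / 4 * ξ) (by positivity) ?_).trans_lt (by linarith)
  rintro a ⟨ha, haB⟩ b ⟨hb, hbB⟩
  have hab : b ∈ Wu f (ξ / 2) a :=
    mem_Wu_mono (by linarith) (mem_Wu_trans (mem_Wu_comm.1 ha) hb)
  have hhab : h b ∈ Wu f ξ (h a) :=
    mem_Wu_mono (by linarith) (mem_Wu_trans (mem_Wu_comm.1 (hu a ha)) (hu b hb))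
  exact hf.dFn_le_of_mem_Ws hlam hm.le hab (hs a ha) (hs b hb) hhab
    ((dFn_le_rdiam (x := h a) (y := h b) haB hbB).trans hB.le)

theorem exists_covN_Wu_plaque_le (hM : TotallyBounded (Set.univ : Set M))
    (hξ : 0 < ξ) (hlam : 1 < lam) (hf : IsSelfSimilar f ξ lam) (hcc : HasCanonicalCoordinates f)
    (htr : MulAction.IsTopologicallyTransitive (Submonoid.powers f) M) :
    ∃ δ > 0, ∀ x z : M, ∃ L : ℕ, ∀ n,
      covN (Wu f δ z) (dFn f n) ξ ≤ covN (Wu f ξ x) (dFn f (n + L)) ξ := by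
  have : BoundedSpace M := ⟨hM.isBounded⟩
  obtain ⟨δ, hδ, hδξ, m, hslide⟩ := exists_covN_Wu_le_of_dist_lt hM hξ hlam hf hcc
  refine ⟨δ, hδ, fun x z => ?_⟩
  obtain ⟨w, hw, N, hwz⟩ := exists_mem_Wu_dist_pow_lt hcc htr hδ x z
  have pullback : Set.MapsTo (f ^ (-N : ℤ)) (Wu f (ξ / 4) ((f ^ N) w)) (Wu f ξ x) :=
    fun q hq => by
      have hqw := zpow_mem_Wu_of_nonpos (k := -N) (by lia) hq
      rw [← zpow_natCast, ← Equiv.Perm.mul_apply, ← zpow_add, neg_add_cancel, zpow_zero,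
        Equiv.Perm.one_apply] at hqw
      exact mem_Wu_mono (by linarith) (mem_Wu_trans hw hqw)
  refine ⟨m + N, fun n => (hslide _ z hwz n).trans ?_⟩
  refine covN_dFn_le_of_mapsTo_zpow (hf.finitelyCoverable_dFn hM hξ hlam.le _ _) pullback ?_
  rw [abs_neg, Nat.abs_cast]
  lia

theorem exists_covN_Wu_le_mul (hM : TotallyBounded (Set.univ : Set M))
    (hξ : 0 < ξ) (hlam : 1 < lam) (hf : IsSelfSimilar f ξ lam) (hcc : HasCanonicalCoordinates f)
    (htr : MulAction.IsTopologicallyTransitive (Submonoid.powers f) M) (x y : M) :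
    ∃ C L : ℕ, ∀ n,
      covN (Wu f ξ y) (dFn f n) ξ ≤ C * covN (Wu f ξ x) (dFn f (n + L)) ξ := by
  have : BoundedSpace M := ⟨hM.isBounded⟩
  have hcov := hf.finitelyCoverable_dFn hM hξ hlam.le
  obtain ⟨δ, hδ, hplaque⟩ := exists_covN_Wu_plaque_le hM hξ hlam hf hcc htr
  choose L hL using hplaque x
  obtain ⟨t, ht⟩ := hf.exists_finset_Wu_subset_biUnion_Wu hM hξ hlam hδ y
  refine ⟨t.card, t.sup L, fun n => ?_⟩
  calc covN (Wu f ξ y) (dFn f n) ξ ≤ ∑ z ∈ t, covN (Wu f δ z) (dFn f n) ξ :=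
        covN_le_sum ht fun _ => hcov _ n
    _ ≤ ∑ _z ∈ t, covN (Wu f ξ x) (dFn f (n + t.sup L)) ξ :=
        Finset.sum_le_sum fun z hz => (hL z n).trans <|
          covN_dFn_le_of_mapsTo_zpow (j := 0) (hcov _ _) (Set.mapsTo_id _)
            (by have := Finset.le_sup (f := L) hz; simp only [abs_zero]; lia)
    _ = t.card * covN (Wu f ξ x) (dFn f (n + t.sup L)) ξ := by
        rw [Finset.sum_const, smul_eq_mul]

theorem tendsto_log_covN_Wu_iff (hM : TotallyBounded (Set.univ : Set M))
    (hξ : 0 < ξ) (hlam : 1 < lam) (hf : IsSelfSimilar f ξ lam) (hcc : HasCanonicalCoordinates f)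
    (htr : MulAction.IsTopologicallyTransitive (Submonoid.powers f) M) (x y : M) (E : ℝ) :
    Tendsto (fun n : ℕ => Real.log (covN (Wu f ξ x) (dFn f n) ξ : ℕ) / n) atTop (𝓝 E) ↔
      Tendsto (fun n : ℕ => Real.log (covN (Wu f ξ y) (dFn f n) ξ : ℕ) / n) atTop (𝓝 E) := by
  have hpos (x : M) (n : ℕ) : 0 < covN (Wu f ξ x) (dFn f n) ξ :=
    (hf.finitelyCoverable_dFn hM hξ hlam.le _ n).covN_pos ⟨x, mem_Wu_self hξ.le⟩
  obtain ⟨C, L, hyx⟩ := exists_covN_Wu_le_mul hM hξ hlam hf hcc htr x y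
  obtain ⟨C', L', hxy⟩ := exists_covN_Wu_le_mul hM hξ hlam hf hcc htr y x
  exact ⟨tendsto_log_div_natCast_of_le_mul_shift (hpos x) (hpos y) hyx hxy,
    tendsto_log_div_natCast_of_le_mul_shift (hpos y) (hpos x) hxy hyx⟩

end CanonicalCoordinates

theorem stmt_16_general {M : Type*} [MetricSpace M] (hM : TotallyBounded (Set.univ : Set M))
    {f : Equiv.Perm M} {ξ lam : ℝ} (hξ : 0 < ξ) (hlam : 1 < lam) (hf : IsSelfSimilar f ξ lam)
    (hcc : HasCanonicalCoordinates f)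
    (htr : MulAction.IsTopologicallyTransitive (Submonoid.powers f) M) :
    ∀ x y : M,
      (∀ E : ℝ,
        Tendsto (fun n : ℕ =>
          Real.log ((covN (Wu f ξ x) (dFn f n) ξ : ℕ) : ℝ) / (n : ℝ)) atTop (𝓝 E) ↔
        Tendsto (fun n : ℕ =>
          Real.log ((covN (Wu f ξ y) (dFn f n) ξ : ℕ) : ℝ) / (n : ℝ)) atTop (𝓝 E)) ∧
      (∀ E : ℝ,
        Tendsto (fun n : ℕ =>
          Real.log ((covN (Ws f ξ x) (dFn f n) ξ : ℕ) : ℝ) / (n : ℝ)) atTop (𝓝 E) ↔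
        Tendsto (fun n : ℕ =>
          Real.log ((covN (Ws f ξ y) (dFn f n) ξ : ℕ) : ℝ) / (n : ℝ)) atTop (𝓝 E)) := by
  refine fun x y => ⟨tendsto_log_covN_Wu_iff hM hξ hlam hf hcc htr x y, fun E => ?_⟩
  simpa only [dFn_symm, ← Ws_symm, Equiv.symm_symm] using
    tendsto_log_covN_Wu_iff hM hξ hlam hf.symm hcc.symm
      (isTopologicallyTransitive_powers_symm htr) x y E

theorem stmt_16 {M : Type*} [MetricSpace M] [CompactSpace M]
    (f : Equiv.Perm M) (hf : Continuous f) (hf' : Continuous f.symm)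
    (ξ lam : ℝ) (hξ : 0 < ξ) (hlam : 1 < lam)
    (hexp : ∀ x y : M, x ≠ y → ∃ n : ℤ, 3 * ξ < dist ((f ^ n) x) ((f ^ n) y))
    (hss : ∀ p q : M, dist p q ≤ ξ →
      max (dist (f p) (f q)) (dist (f.symm p) (f.symm q)) = lam * dist p q)
    (hcc : ∀ ε > (0 : ℝ), ∃ δ > (0 : ℝ), ∀ x y : M, dist x y < δ → (Ws f ε x ∩ Wu f ε y).Nonempty)
    (htrans : ∃ x₀ : M, Dense (Set.range fun n : ℕ => (f ^ n) x₀)) :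
    ∀ x y : M,
      (∀ E : ℝ,
        Tendsto (fun n : ℕ =>
          Real.log ((covN (Wu f ξ x) (dFn f n) ξ : ℕ) : ℝ) / (n : ℝ)) atTop (𝓝 E) ↔
        Tendsto (fun n : ℕ =>
          Real.log ((covN (Wu f ξ y) (dFn f n) ξ : ℕ) : ℝ) / (n : ℝ)) atTop (𝓝 E)) ∧
      (∀ E : ℝ,
        Tendsto (fun n : ℕ =>
          Real.log ((covN (Ws f ξ x) (dFn f n) ξ : ℕ) : ℝ) / (n : ℝ)) atTop (𝓝 E) ↔
        Tendsto (fun n : ℕ =>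
          Real.log ((covN (Ws f ξ y) (dFn f n) ξ : ℕ) : ℝ) / (n : ℝ)) atTop (𝓝 E)) :=
  stmt_16_general isCompact_univ.totallyBounded hξ hlam hss hcc
    (isTopologicallyTransitive_powers_of_dense hf htrans)
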